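/- arXiv:1901.10911 — 2 statements merged into one kernel-verified Lean document; each statement's English description precedes it below -/
import Mathlib

section
/- Let G28 be the graph on vertex set {0,1,…,43} with adjacency list {0: 1 2 3; 1: 0 40 41; 2: 0 39 43; 3: 0 38 42; 4: 9 13 17; 5: 8 12 17; 6: 7 15 19; 7: 6 16 18; 8: 5 9 14; 9: 4 8 11; 10: 13 16 22; 11: 9 12 20; 12: 5 11 26; 13: 4 10 25; 14: 8 15 21; 15: 6 14 23; 16: 7 10 24; 17: 4 5 20; 18: 7 22 28; 19: 6 21 27; 20: 11 17 32; 21: 14 19 37; 22: 10 18 36; 23: 15 27 37; 24: 16 28 36; 25: 13 30 35; 26: 12 29 34; 27: 19 23 32; 28: 18 24 33; 29: 26 31 35; 30: 25 31 34; 31: 29 30 33; 32: 20 27 40; 33: 28 31 41; 34: 26 30 39; 35: 25 29 39; 36: 22 24 38; 37: 21 23 38; 38: 3 36 37; 39: 2 34 35; 40: 1 32 43; 41: 1 33 42; 42: 3 41 43; 43: 2 40 42}. Then G28 is a cubic graph that admits no proper 3-edge-colouring, its resistance satisfies ρ(G28) ≥ 3 (removing any two vertices leaves a graph with no proper 3-edge-colouring),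 and its oddness satisfies ω(G28) ≥ 4. -/
/-! Basic definitions about cubic graphs, edge colourings, oddness, resistance,
and cyclic connectivity. -/

/-- A proper 3-edge-colouring of a simple graph: a colour for every unordered pair,
such that distinct edges of the graph sharing a vertex receive distinct colours. -/
def IsProper3EdgeColoring {V : Type*} (G : SimpleGraph V) (c : Sym2 V → Fin 3) : Prop :=
  ∀ e₁ e₂ : Sym2 V, e₁ ∈ G.edgeSet → e₂ ∈ G.edgeSet → e₁ ≠ e₂ →
    (∃ v, v ∈ e₁ ∧ v ∈ e₂) → c e₁ ≠ c e₂

/-- A graph admits a proper 3-edge-colouring. -/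
def ThreeEdgeColorable {V : Type*} (G : SimpleGraph V) : Prop :=
  ∃ c : Sym2 V → Fin 3, IsProper3EdgeColoring G c

/-- A cubic graph: every vertex has exactly 3 neighbours. -/
def IsCubic {V : Type*} (G : SimpleGraph V) : Prop :=
  ∀ v : V, Nat.card (G.neighborSet v) = 3

/-- A 2-connected graph: connected and with no cutvertex. -/
def TwoConnected {V : Type*} (G : SimpleGraph V) : Prop :=
  G.Connected ∧ ∀ v : V, (G.induce ({v}ᶜ : Set V)).Connected

/-- A snark: a 2-connected cubic graph admitting no proper 3-edge-colouring. -/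
def IsSnark {V : Type*} (G : SimpleGraph V) : Prop :=
  IsCubic G ∧ TwoConnected G ∧ ¬ ThreeEdgeColorable G

/-- A 2-factor of `G`: a spanning subgraph in which every vertex has degree 2. -/
def IsTwoFactor {V : Type*} (G H : SimpleGraph V) : Prop :=
  H ≤ G ∧ ∀ v : V, Nat.card (H.neighborSet v) = 2

/-- An even factor of `G`: a spanning subgraph in which every vertex has even degree. -/
def IsEvenFactor {V : Type*} (G H : SimpleGraph V) : Prop :=
  H ≤ G ∧ ∀ v : V, Even (Nat.card (H.neighborSet v))

/-- The number of connected components of odd order of a graph. -/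
noncomputable def oddComponentCount {V : Type*} (H : SimpleGraph V) : ℕ :=
  Nat.card {C : H.ConnectedComponent // Odd (Nat.card C.supp)}

/-- The oddness of a graph: the smallest number of odd components
(odd circuits) in a 2-factor. -/
noncomputable def oddness {V : Type*} (G : SimpleGraph V) : ℕ :=
  sInf {n | ∃ H : SimpleGraph V, IsTwoFactor G H ∧ oddComponentCount H = n}

/-- The weak oddness of a graph: the smallest number of odd components in an even factor. -/
noncomputable def weakOddness {V : Type*} (G : SimpleGraph V) : ℕ :=
  sInf {n | ∃ H : SimpleGraph V, IsEvenFactor G H ∧ oddComponentCount H = n}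

/-- The resistance of a graph: the smallest number of vertices whose removal
yields a graph admitting a proper 3-edge-colouring. -/
noncomputable def resistance {V : Type*} (G : SimpleGraph V) : ℕ :=
  sInf {n | ∃ S : Set V, S.ncard = n ∧ ThreeEdgeColorable (G.induce Sᶜ)}

/-- There is a cycle through the vertex `v`. -/
def HasCycleAt {V : Type*} (G : SimpleGraph V) (v : V) : Prop :=
  ∃ p : G.Walk v v, p.IsCycle

/-- A set of edges is cycle-separating if after deleting it at least two components
contain cycles. -/
def CycleSeparating {V : Type*} (G : SimpleGraph V) (s : Set (Sym2 V)) : Prop :=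
  s ⊆ G.edgeSet ∧ ∃ u v : V, HasCycleAt (G.deleteEdges s) u ∧ HasCycleAt (G.deleteEdges s) v ∧
    ¬ (G.deleteEdges s).Reachable u v

/-- `G` is cyclically `k`-edge-connected: no set of fewer than `k` edges is cycle-separating. -/
def CyclicallyEdgeConnected {V : Type*} (G : SimpleGraph V) (k : ℕ) : Prop :=
  ∀ s : Finset (Sym2 V), s.card < k → ¬ CycleSeparating G (↑s : Set (Sym2 V))

/-- The cycle rank `β(G) = |E(G)| - |V(G)| + 1` of a graph. -/
noncomputable def cycleRank {V : Type*} (G : SimpleGraph V) : ℕ :=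
  Nat.card G.edgeSet + 1 - Nat.card V

/-- The cyclic connectivity of `G`: the largest `k ≤ β(G)` such that `G` is
cyclically `k`-edge-connected. -/
noncomputable def cyclicConnectivity {V : Type*} (G : SimpleGraph V) : ℕ :=
  sSup {k | k ≤ cycleRank G ∧ CyclicallyEdgeConnected G k}

/-- The circumference of a graph: the maximum length of a cycle. -/
noncomputable def circumference {V : Type*} (G : SimpleGraph V) : ℕ :=
  sSup {n | ∃ (v : V) (p : G.Walk v v), p.IsCycle ∧ p.length = n}

/-- The edges of graph number 28 (Class 5a) of the 31 snarks of order 44,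
cyclic connectivity 4 and oddness 4, as a list of pairs. -/
def g28EdgeList : List (Fin 44 × Fin 44) :=
  [(0,1),(0,2),(0,3),(1,40),(1,41),(2,39),(2,43),(3,38),(3,42),
   (4,9),(4,13),(4,17),(5,8),(5,12),(5,17),(6,7),(6,15),(6,19),
   (7,16),(7,18),(8,9),(8,14),(9,11),(10,13),(10,16),(10,22),
   (11,12),(11,20),(12,26),(13,25),(14,15),(14,21),(15,23),(16,24),
   (17,20),(18,22),(18,28),(19,21),(19,27),(20,32),(21,37),(22,36),
   (23,27),(23,37),(24,28),(24,36),(25,30),(25,35),(26,29),(26,34),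
   (27,32),(28,33),(29,31),(29,35),(30,31),(30,34),(31,33),(32,40),
   (33,41),(34,39),(35,39),(36,38),(37,38),(40,43),(41,42),(42,43)]

/-- Graph number 28 of the 31 snarks in `𝓜`. -/
def g28 : SimpleGraph (Fin 44) :=
  SimpleGraph.fromRel (fun a b => (a, b) ∈ g28EdgeList)

/-!
`G28` contains five disjoint copies of the 4-pole `I`, an 8-cycle with two antipodal chords. In a
proper colouring of `I` the two dangling edges at antipodal vertices have the same colour. Hence if
two copies are joined directly by a dangling edge, the antipodal dangling edges have the same
colour, so no colouring is proper at both copies and at a common end of those antipodal edges. This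
gives four sets of vertices each of which meets the improper vertices of any colouring. Two vertices
meet all four sets only if one lies in the pole `C` and the other in the pole `D`. Properness at a
vertex of a cubic graph says that the three colours, seen as the nonzero elements of `𝔽₂²`, sum
to `0`. Summing over `C` and the surrounding vertices, where the colouring is proper, shows that the
colouring is proper on all of `C`, which contradicts the first of the four sets. Therefore the
resistance is at least 3.

The resistance is at most the oddness: colour the complement of a 2-factor with one colour, and
alternate the two others along each circuit, with one improper vertex for each odd circuit. The
oddness is even because the order of the graph is.
-/

section Colorings

variable {V W : Type*} {G : SimpleGraph V} {S T : Set V}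

/-- The colouring `c` is proper at `v`: it is injective on the edges of `G` at `v`. Colourings that
are proper everywhere except on `S` replace colourings of `G` with `S` removed. -/
def IsProperAt (G : SimpleGraph V) (c : Sym2 V → Fin 3) (v : V) : Prop :=
  (G.neighborSet v).InjOn fun w => c s(v, w)

theorem IsCubic.isProperAt_iff {c : Sym2 V → Fin 3} {v x y z : V} (hG : IsCubic G)
    (hv : G.neighborSet v = {x, y, z}) :
    IsProperAt G c v ↔
      c s(v, x) ≠ c s(v, y) ∧ c s(v, x) ≠ c s(v, z) ∧ c s(v, y) ≠ c s(v, z) := by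
  have hcard : ({x, y, z} : Set V).ncard = 3 := hv ▸ hG v
  have hpair (a b : V) : ({a, b} : Set V).ncard ≠ 3 := by
    grind [Set.ncard_insert_le a {b}, Set.ncard_singleton b]
  have hxy : x ≠ y := by rintro rfl; exact hpair x z (by simpa using hcard)
  have hxz : x ≠ z := by rintro rfl; exact hpair y x (by simpa [Set.insert_comm] using hcard)
  have hyz : y ≠ z := by rintro rfl; exact hpair x y (by simpa using hcard)
  rw [IsProperAt, hv]
  simp only [Set.mem_insert_iff, hxy, Set.mem_singleton_iff, hxz, or_self, not_false_eq_true,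
    Set.injOn_insert, hyz, Set.injOn_singleton, Set.image_singleton, true_and, Set.mem_image,
    eq_comm, exists_eq_or_imp', ↓existsAndEq, not_or, ne_eq]
  tauto

theorem ThreeEdgeColorable.of_injective_hom {H : SimpleGraph W} (h : ThreeEdgeColorable H)
    (f : G →g H) (hf : Function.Injective f) : ThreeEdgeColorable G := by
  obtain ⟨c, hc⟩ := h
  refine ⟨fun e => c (e.map f), fun e₁ e₂ h₁ h₂ hne ⟨v, hv₁, hv₂⟩ => ?_⟩
  exact hc _ _ (f.map_mem_edgeSet h₁) (f.map_mem_edgeSet h₂)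
    ((Sym2.map.injective hf).ne hne)
    ⟨f v, Sym2.mem_map.2 ⟨v, hv₁, rfl⟩, Sym2.mem_map.2 ⟨v, hv₂, rfl⟩⟩

theorem ThreeEdgeColorable.induce (h : ThreeEdgeColorable G) (T : Set V) :
    ThreeEdgeColorable (G.induce T) :=
  h.of_injective_hom (SimpleGraph.Embedding.induce T).toHom Subtype.val_injective

theorem ThreeEdgeColorable.induce_mono (h : ThreeEdgeColorable (G.induce T)) (hST : S ⊆ T) :
    ThreeEdgeColorable (G.induce S) :=
  h.of_injective_hom (SimpleGraph.induceHomOfLE G hST).toHom (Set.inclusion_injective hST)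

theorem threeEdgeColorable_induce_compl_of_isProperAt {c : Sym2 V → Fin 3}
    (hc : ∀ v ∉ S, IsProperAt G c v) : ThreeEdgeColorable (G.induce Sᶜ) := by
  refine ⟨fun e => c (e.map Subtype.val), ?_⟩
  rintro e₁ e₂ h₁ h₂ hne ⟨v, hv₁, hv₂⟩
  obtain ⟨a, rfl⟩ := hv₁
  obtain ⟨b, rfl⟩ := hv₂
  have hab : (a : V) ≠ b := fun h => hne (by rw [Subtype.ext h])
  exact (hc v v.2).ne h₁ h₂ hab

theorem exists_injOn_eqOn_compl {α β : Type*} {s t : Set α} [Finite s] [Finite β]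
    {g : α → β} (hg : (s \ t).InjOn g) (hs : Nat.card s = Nat.card β) :
    ∃ f : α → β, s.InjOn f ∧ Set.EqOn f g tᶜ := by
  classical
  have := Fintype.ofFinite s
  have := Fintype.ofFinite β
  obtain ⟨e, he⟩ := Set.MapsTo.exists_equiv_extend_of_card_eq (α := s)
    (t := Finset.univ) (f := fun a => g a) (s := {a | (a : α) ∉ t})
    (by rw [← Nat.card_eq_fintype_card, hs, Nat.card_eq_fintype_card, Finset.card_univ])
    (by simp [Set.MapsTo])
    fun a ha b hb hab => Subtype.ext (hg ⟨a.2, ha⟩ ⟨b.2, hb⟩ hab)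
  refine ⟨fun a => if h : a ∈ s then e ⟨a, h⟩ else g a, fun a ha b hb hab => ?_, fun a ha => ?_⟩
  · simp only [dif_pos ha, dif_pos hb] at hab
    exact congrArg Subtype.val (e.injective (Subtype.ext hab))
  · by_cases has : a ∈ s
    · simpa only [dif_pos has] using he ⟨a, has⟩ ha
    · simp only [dif_neg has]

theorem exists_sym2_eq_of_symm_on_compl {α : Type*} [Nonempty α] {f : V → V → α}
    (hf : ∀ v ∉ S, ∀ w ∉ S, f v w = f w v) :
    ∃ c : Sym2 V → α, ∀ v ∉ S, ∀ w, c s(v, w) = f v w := by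
  classical
  refine ⟨fun e => if h : ∃ v ∈ e, v ∉ S then f h.choose (Sym2.Mem.other h.choose_spec.1)
    else Classical.arbitrary α, fun v hv w => ?_⟩
  have h : ∃ u ∈ s(v, w), u ∉ S := ⟨v, Sym2.mem_mk_left v w, hv⟩
  simp only [dif_pos h]
  have hother := Sym2.other_spec h.choose_spec.1
  have hS := h.choose_spec.2
  rcases Sym2.eq_iff.1 hother with ⟨h₁, h₂⟩ | ⟨h₁, h₂⟩
  · rw [h₂, h₁]
  · rw [h₂, h₁]
    exact hf w (h₁ ▸ hS) v hv

-- An edge meeting `S` has at most one end outside `S`, so it can be recoloured to suit that end.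
theorem ThreeEdgeColorable.exists_isProperAt (hG : IsCubic G)
    (h : ThreeEdgeColorable (G.induce Sᶜ)) :
    ∃ c : Sym2 V → Fin 3, ∀ v ∉ S, IsProperAt G c v := by
  obtain ⟨c, hc⟩ := h
  let c₀ : Sym2 V → Fin 3 := Function.extend (Sym2.map Subtype.val) c 0
  have hc₀ (a b : (Sᶜ : Set V)) : c₀ s(a, b) = c s(a, b) :=
    (Sym2.map.injective Subtype.val_injective).extend_apply c 0 s(a, b)
  have hinj (v : V) (hv : v ∉ S) : (G.neighborSet v \ S).InjOn fun w => c₀ s(v, w) := by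
    rintro a ⟨hva, ha⟩ b ⟨hvb, hb⟩ hab
    by_contra hne
    refine hc s(⟨v, hv⟩, ⟨a, ha⟩) s(⟨v, hv⟩, ⟨b, hb⟩) hva hvb ?_
      ⟨⟨v, hv⟩, Sym2.mem_mk_left _ _, Sym2.mem_mk_left _ _⟩ ?_
    · rw [Ne, Sym2.congr_right]
      exact fun h => hne (congrArg Subtype.val h)
    · rw [← hc₀, ← hc₀]
      exact hab
  have hext (v : V) (hv : v ∉ S) :
      ∃ f : V → Fin 3, (G.neighborSet v).InjOn f ∧ Set.EqOn f (fun w => c₀ s(v, w)) Sᶜ := by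
    have : Finite (G.neighborSet v) := Nat.finite_of_card_ne_zero (by simp [hG v])
    exact exists_injOn_eqOn_compl (hinj v hv) (by simp [hG v])
  choose! f hf_inj hf_eq using hext
  obtain ⟨d, hd⟩ := exists_sym2_eq_of_symm_on_compl (f := f) (S := S) fun v hv w hw => by
    simp only [hf_eq v hv hw, hf_eq w hw hv, Sym2.eq_swap]
  refine ⟨d, fun v hv => ?_⟩
  simpa only [IsProperAt, hd v hv] using hf_inj v hv

end Colorings

section Resistance

variable {V : Type*} {G : SimpleGraph V}

theorem resistance_le_ncard {S : Set V} (h : ThreeEdgeColorable (G.induce Sᶜ)) :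
    resistance G ≤ S.ncard :=
  Nat.sInf_le ⟨S, rfl, h⟩

theorem exists_ncard_eq_resistance (G : SimpleGraph V) :
    ∃ S : Set V, S.ncard = resistance G ∧ ThreeEdgeColorable (G.induce Sᶜ) :=
  Nat.sInf_mem (s := {n | ∃ S : Set V, S.ncard = n ∧ ThreeEdgeColorable (G.induce Sᶜ)})
    ⟨_, Set.univ, rfl, 0, fun _ _ _ _ _ ⟨v, _⟩ => absurd (Set.mem_univ v.1) v.2⟩

theorem lt_resistance_of_forall_ncard_eq {n : ℕ} (hn : n ≤ Nat.card V)
    (h : ∀ T : Set V, T.ncard = n → ¬ ThreeEdgeColorable (G.induce Tᶜ)) : n < resistance G := by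
  by_contra! hle
  obtain ⟨S, hS, hcol⟩ := exists_ncard_eq_resistance G
  obtain ⟨T, hST, -, hT⟩ := Set.exists_subsuperset_card_eq S.subset_univ (hS.trans_le hle)
    (hn.trans_eq (Set.ncard_univ V).symm)
  exact h T hT (hcol.induce_mono (Set.compl_subset_compl.2 hST))

end Resistance

section Incidence

open Matrix

variable {V R : Type*} [NonAssocSemiring R] [DecidableEq V] {H : SimpleGraph V}
  [DecidableRel H.Adj] {u v : V}

theorem incMatrix_mulVec_apply [Fintype V] (f : Sym2 V → R) (v : V) :
    (H.incMatrix R *ᵥ f) v = ∑ w ∈ H.neighborFinset v, f s(v, w) := by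
  simp only [mulVec, dotProduct, SimpleGraph.incMatrix_apply', ite_mul, one_mul, zero_mul,
    ← Finset.sum_filter]
  symm
  refine Finset.sum_nbij (fun w => s(v, w)) (fun w hw => ?_) (fun _ _ _ _ => Sym2.congr_right.1)
    (fun e he => ?_) fun _ _ => rfl
  · simpa using hw
  · obtain ⟨he, w, rfl⟩ := (Finset.mem_filter.1 he).2
    exact ⟨w, by simpa using he, rfl⟩

theorem incMatrix_col_mk (h : H.Adj u v) :
    (H.incMatrix R).col s(u, v) = Pi.single u 1 + Pi.single v 1 := by
  ext x
  rw [Matrix.col_apply, SimpleGraph.incMatrix_apply', Pi.add_apply, Pi.single_apply,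
    Pi.single_apply]
  by_cases hu : x = u
  · subst hu
    simp [h, h.ne]
  · simp [SimpleGraph.incidenceSet, h, hu]

theorem single_add_single_mem_range_incMatrix [Fintype V] (h : H.Reachable u v) :
    Pi.single u 1 + Pi.single v 1 ∈ LinearMap.range (H.incMatrix (ZMod 2)).mulVecLin := by
  obtain ⟨p⟩ := h
  induction p with
  | nil => exact ZModModule.add_self (G := V → ZMod 2) _ ▸ zero_mem _
  | @cons u m v h _ ih =>
    have hu : Pi.single u 1 + Pi.single m 1 ∈ LinearMap.range (H.incMatrix (ZMod 2)).mulVecLin :=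
      ⟨Pi.single s(u, m) 1, by rw [mulVecLin_apply, mulVec_single_one, incMatrix_col_mk h]⟩
    convert add_mem hu ih using 1
    rw [← add_assoc, add_assoc (Pi.single u 1), ZModModule.add_self, add_zero]

-- For each `v` with root `r` the vector `e_v + e_r` lies in the range. In the sum of these vectors
-- every entry is 1, except that a root receives a further 1 from each vertex of its component.
theorem exists_incMatrix_mulVec_eq_one [Fintype V] (H : SimpleGraph V) [DecidableRel H.Adj] :
    ∃ f : Sym2 V → ZMod 2, ∀ v ∉ Quot.out '' H.oddComponents,
      (H.incMatrix (ZMod 2) *ᵥ f) v = 1 := by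
  let root (v : V) : V := (H.connectedComponentMk v).out
  have hroot (v : V) : H.connectedComponentMk (root v) = H.connectedComponentMk v := Quot.out_eq _
  have hmem : ∑ v, (Pi.single v 1 + Pi.single (root v) 1) ∈
      LinearMap.range (H.incMatrix (ZMod 2)).mulVecLin :=
    sum_mem fun v _ =>
      single_add_single_mem_range_incMatrix (SimpleGraph.ConnectedComponent.exact (hroot v).symm)
  obtain ⟨f, hf⟩ := hmem
  refine ⟨f, fun x hx => ?_⟩
  have hfiber : Even (Finset.card {v | root v = x}) := by
    by_cases hxx : root x = x
    · have hsupp : (H.connectedComponentMk x).supp = ({v | root v = x} : Finset V) := by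
        ext v
        rw [SimpleGraph.ConnectedComponent.mem_supp_iff, Finset.coe_filter_univ, Set.mem_ofPred_eq]
        exact ⟨fun h => (congrArg Quot.out h).trans hxx, fun h => by rw [← hroot, h]⟩
      rw [← Nat.not_odd_iff_even, ← Set.ncard_coe_finset, ← hsupp]
      exact fun hodd => hx ⟨_, hodd, hxx⟩
    · have hempty : ({v | root v = x} : Finset V) = ∅ :=
        Finset.filter_eq_empty_iff.2 fun v _ h => hxx <| h ▸ congrArg Quot.out (hroot v)
      simp [hempty]
  rw [mulVecLin_apply] at hf
  rw [hf, Finset.sum_add_distrib, Pi.add_apply, Finset.univ_sum_single fun _ => (1 : ZMod 2),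
    Finset.sum_apply]
  simp [Pi.single_apply, eq_comm (a := x), ZMod.natCast_eq_zero_iff_even.2 hfiber]

end Incidence

section TwoFactors

variable {V : Type*} {G H : SimpleGraph V}

theorem IsTwoFactor.exists_neighborSet_eq {v : V} (hG : IsCubic G) (hH : IsTwoFactor G H) :
    ∃ x y z, H.neighborSet v = {x, y} ∧ x ≠ y ∧ ¬ H.Adj v z ∧ G.neighborSet v = {x, y, z} := by
  obtain ⟨x, y, hxy, hHv⟩ := Set.ncard_eq_two.1 (hH.2 v)
  have hle : H.neighborSet v ⊆ G.neighborSet v := fun _ h => hH.1 h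
  have hfin : (G.neighborSet v).Finite := Set.finite_of_ncard_ne_zero (by
    rw [← Nat.card_coe_set_eq, hG v]; decide)
  have hdiff : (G.neighborSet v \ H.neighborSet v).ncard = 1 := by
    rw [Set.ncard_sdiff hle (hfin.subset hle)]
    exact congrArg₂ (· - ·) (hG v) (hH.2 v)
  obtain ⟨z, hz⟩ := Set.ncard_eq_one.1 hdiff
  refine ⟨x, y, z, hHv, hxy, (hz.symm ▸ Set.mem_singleton z :).2, ?_⟩
  rw [← Set.union_sdiff_cancel hle, hz, hHv, Set.insert_union, Set.singleton_union]

theorem IsTwoFactor.exists_isProperAt [Finite V] (hG : IsCubic G) (hH : IsTwoFactor G H) :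
    ∃ c : Sym2 V → Fin 3, ∀ v ∉ Quot.out '' H.oddComponents, IsProperAt G c v := by
  classical
  have := Fintype.ofFinite V
  obtain ⟨f, hf⟩ := exists_incMatrix_mulVec_eq_one H
  refine ⟨fun e => if e ∈ H.edgeSet then if f e = 0 then 0 else 1 else 2, fun v hv => ?_⟩
  obtain ⟨x, y, z, hHv, hxy, hz, hGv⟩ := hH.exists_neighborSet_eq (v := v) hG
  have hx : H.Adj v x := hHv.superset (Set.mem_insert x {y})
  have hy : H.Adj v y := hHv.superset (Set.mem_insert_of_mem x rfl)
  have hsum : f s(v, x) + f s(v, y) = 1 := by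
    rw [← hf v hv, incMatrix_mulVec_apply, ← Finset.sum_pair (f := fun w => f s(v, w)) hxy]
    exact Finset.sum_congr (by rw [← Finset.coe_inj]; simpa using hHv.symm) fun _ _ => rfl
  rw [hG.isProperAt_iff hGv]
  simp only [SimpleGraph.mem_edgeSet, if_pos hx, if_pos hy, if_neg hz]
  generalize f s(v, x) = a, f s(v, y) = b at hsum
  revert a b
  decide

theorem IsTwoFactor.resistance_le_oddComponentCount [Finite V] (hG : IsCubic G)
    (hH : IsTwoFactor G H) : resistance G ≤ oddComponentCount H := by
  obtain ⟨c, hc⟩ := hH.exists_isProperAt hG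
  exact (resistance_le_ncard (threeEdgeColorable_induce_compl_of_isProperAt hc)).trans
    Set.ncard_image_le

theorem exists_oddComponentCount_eq_oddness (hG : ∃ H, IsTwoFactor G H) :
    ∃ H, IsTwoFactor G H ∧ oddComponentCount H = oddness G :=
  Nat.sInf_mem (s := {n | ∃ H, IsTwoFactor G H ∧ oddComponentCount H = n})
    (hG.elim fun H hH => ⟨_, H, hH, rfl⟩)

theorem resistance_le_oddness [Finite V] (hG : IsCubic G) (hfactor : ∃ H, IsTwoFactor G H) :
    resistance G ≤ oddness G := by
  obtain ⟨H, hH, hodd⟩ := exists_oddComponentCount_eq_oddness hfactor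
  exact hodd ▸ hH.resistance_le_oddComponentCount hG

theorem even_oddComponentCount [Finite V] (hV : Even (Nat.card V)) (H : SimpleGraph V) :
    Even (oddComponentCount H) :=
  Nat.not_odd_iff_even.1 fun hodd =>
    Nat.not_odd_iff_even.2 hV (H.odd_ncard_oddComponents.1 hodd)

theorem even_oddness [Finite V] (hV : Even (Nat.card V)) (hfactor : ∃ H, IsTwoFactor G H) :
    Even (oddness G) := by
  obtain ⟨H, -, hodd⟩ := exists_oddComponentCount_eq_oddness hfactor
  exact hodd ▸ even_oddComponentCount hV H

theorem IsCubic.exists_isTwoFactor {mate : V → V} (hG : IsCubic G)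
    (hmate : Function.Involutive mate) (hadj : ∀ v, G.Adj v (mate v)) :
    ∃ H, IsTwoFactor G H := by
  let H : SimpleGraph V :=
    { Adj := fun u v => G.Adj u v ∧ v ≠ mate u
      symm := ⟨fun u v h => ⟨h.1.symm, fun huv => h.2 (huv ▸ (hmate v).symm)⟩⟩ }
  refine ⟨H, fun _ _ h => h.1, fun v => ?_⟩
  have hHv : H.neighborSet v = G.neighborSet v \ {mate v} := rfl
  rw [hHv, Nat.card_coe_set_eq, Set.ncard_sdiff_singleton_of_mem
    ((G.mem_neighborSet v (mate v)).2 (hadj v))]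
  exact congrArg (· - 1) (hG v)

end TwoFactors

/-- The colours as the nonzero elements of the Klein four-group, so that three colours are distinct
exactly when they sum to zero. -/
def colorVec : Fin 3 → ZMod 2 × ZMod 2 :=
  ![(0, 1), (1, 0), (1, 1)]

theorem colorVec_add_add_eq_zero_iff :
    ∀ i j k : Fin 3, colorVec i + colorVec j + colorVec k = 0 ↔ i ≠ j ∧ i ≠ k ∧ j ≠ k := by
  decide

theorem IsCubic.isProperAt_iff_colorVec {V : Type*} {G : SimpleGraph V} {c : Sym2 V → Fin 3}
    {v x y z : V} (hG : IsCubic G) (hv : G.neighborSet v = {x, y, z}) :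
    IsProperAt G c v ↔
      colorVec (c s(v, x)) + colorVec (c s(v, y)) + colorVec (c s(v, z)) = 0 := by
  rw [hG.isProperAt_iff hv, colorVec_add_add_eq_zero_iff]

section EightCycle

theorem color_eq_of_ne {i j k l : Fin 3} (h : i ≠ j ∧ i ≠ k ∧ j ≠ k) (hi : l ≠ i) (hj : l ≠ j) :
    l = k := by
  lia

theorem rim_eq_and_spoke_eq {p q r x y z m : Fin 3} (hpq : p ≠ q ∧ p ≠ r ∧ q ≠ r)
    (hm : x ≠ y ∧ x ≠ m ∧ y ≠ m) (hq : y ≠ z ∧ y ≠ q ∧ z ≠ q) (hx : x = r) : z = r ∧ m = q := by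
  subst hx
  have hy : y = p := color_eq_of_ne ⟨hpq.2.2, hpq.1.symm, hpq.2.1.symm⟩ hq.2.1 hm.1.symm
  subst hy
  exact ⟨color_eq_of_ne hpq hq.1.symm hq.2.2,
    color_eq_of_ne ⟨hpq.2.1, hpq.1, hpq.2.2.symm⟩ hm.2.2.symm hm.2.1.symm⟩

theorem spoke_eq {x y m p : Fin 3} (hm : x ≠ y ∧ x ≠ m ∧ y ≠ m) (hx : x ≠ p) (hy : y ≠ p) :
    m = p :=
  color_eq_of_ne ⟨hm.1, hx, hy⟩ hm.2.1.symm hm.2.2.symm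

variable {x m : Fin 8 → Fin 3}

theorem spoke_add_four_of_eq (hx : ∀ i, x (i - 1) ≠ x i ∧ x (i - 1) ≠ m i ∧ x i ≠ m i)
    (h₁₅ : m 5 = m 1) (h₃₇ : m 7 = m 3) (h : m 3 = m 1) : m 4 = m 0 ∧ m 6 = m 2 := by
  have h₇₁ : m 7 = m 1 := h₃₇.trans h
  have hm₀ : m 0 = m 1 := spoke_eq (hx 0) (h₇₁ ▸ (hx 7).2.2) (hx 1).2.1
  have hm₂ : m 2 = m 1 := spoke_eq (hx 2) (hx 1).2.2 (h ▸ (hx 3).2.1)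
  have hm₄ : m 4 = m 1 := spoke_eq (hx 4) (h ▸ (hx 3).2.2) (h₁₅ ▸ (hx 5).2.1)
  have hm₆ : m 6 = m 1 := spoke_eq (hx 6) (h₁₅ ▸ (hx 5).2.2) (h₇₁ ▸ (hx 7).2.1)
  exact ⟨hm₄.trans hm₀.symm, hm₆.trans hm₂.symm⟩

theorem spoke_add_four_of_ne (hx : ∀ i, x (i - 1) ≠ x i ∧ x (i - 1) ≠ m i ∧ x i ≠ m i)
    (h₁₅ : m 5 = m 1) (h₃₇ : m 7 = m 3) (h : m 1 ≠ m 3) : m 4 = m 0 ∧ m 6 = m 2 := by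
  obtain ⟨r, h₁, h₃⟩ : ∃ r, m 1 ≠ r ∧ m 3 ≠ r := by
    generalize m 1 = p, m 3 = q
    decide +revert
  have hrev (i : Fin 8) : x i ≠ x (i - 1) ∧ x i ≠ m i ∧ x (i - 1) ≠ m i :=
    ⟨(hx i).1.symm, (hx i).2.2, (hx i).2.1⟩
  -- The third colour `r` appears at vertex 1 on one of its rim edges, and then on every second one.
  by_cases hr : x 1 = r
  · obtain ⟨hr₃, hm₂⟩ := rim_eq_and_spoke_eq ⟨h, h₁, h₃⟩ (hx 2) (hx 3) hr
    obtain ⟨hr₅, hm₄⟩ := rim_eq_and_spoke_eq ⟨h.symm, h₃, h₁⟩ (hx 4) (h₁₅ ▸ hx 5) hr₃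
    obtain ⟨hr₇, hm₆⟩ := rim_eq_and_spoke_eq ⟨h, h₁, h₃⟩ (hx 6) (h₃₇ ▸ hx 7) hr₅
    obtain ⟨-, hm₀⟩ := rim_eq_and_spoke_eq ⟨h.symm, h₃, h₁⟩ (hx 0) (hx 1) hr₇
    exact ⟨hm₄.trans hm₀.symm, hm₆.trans hm₂.symm⟩
  · have h₁₃ : x 1 = m 3 := color_eq_of_ne ⟨h₁, h, h₃.symm⟩ (hx 1).2.2 hr
    have hr₀ : x 0 = r := color_eq_of_ne ⟨h, h₁, h₃⟩ (hx 1).2.1 (h₁₃ ▸ (hx 1).1)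
    obtain ⟨hr₆, hm₀⟩ := rim_eq_and_spoke_eq ⟨h, h₁, h₃⟩ (hrev 0) (h₃₇ ▸ hrev 7) hr₀
    obtain ⟨hr₄, hm₆⟩ := rim_eq_and_spoke_eq ⟨h.symm, h₃, h₁⟩ (hrev 6) (h₁₅ ▸ hrev 5) hr₆
    obtain ⟨hr₂, hm₄⟩ := rim_eq_and_spoke_eq ⟨h, h₁, h₃⟩ (hrev 4) (hrev 3) hr₄
    obtain ⟨-, hm₂⟩ := rim_eq_and_spoke_eq ⟨h.symm, h₃, h₁⟩ (hrev 2) (hrev 1) hr₂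
    exact ⟨hm₄.trans hm₀.symm, hm₆.trans hm₂.symm⟩

theorem spoke_add_four (hx : ∀ i, x (i - 1) ≠ x i ∧ x (i - 1) ≠ m i ∧ x i ≠ m i)
    (h₁₅ : m 5 = m 1) (h₃₇ : m 7 = m 3) : m 4 = m 0 ∧ m 6 = m 2 := by
  by_cases h : m 3 = m 1
  · exact spoke_add_four_of_eq hx h₁₅ h₃₇ h
  · exact spoke_add_four_of_ne hx h₁₅ h₃₇ (Ne.symm h)

theorem sum_colorVec_rim_spoke (h₁₅ : m 5 = m 1) (h₃₇ : m 7 = m 3) :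
    ∑ i, (colorVec (x (i - 1)) + colorVec (x i) + colorVec (m i)) =
      colorVec (m 0) + colorVec (m 2) + colorVec (m 4) + colorVec (m 6) := by
  have hshift : ∑ i, colorVec (x (i - 1)) = ∑ i, colorVec (x i) :=
    (Equiv.subRight (1 : Fin 8)).sum_comp fun i => colorVec (x i)
  rw [Finset.sum_add_distrib, Finset.sum_add_distrib, hshift, ZModModule.add_self, zero_add,
    Fin.sum_univ_eight, h₁₅, h₃₇]
  linear_combination ZModModule.add_self (colorVec (m 1)) + ZModModule.add_self (colorVec (m 3))

end EightCycle

/-- A copy in `G` of the isochromatic 4-pole `I`, the Petersen graph minus two adjacent vertices: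
an 8-cycle, indexed modulo 8, whose odd vertices are joined to their antipodes, the four even
vertices carrying the dangling edges. `mate i` is the neighbour of `vertex i` off the 8-cycle. -/
structure IsochromaticPole {V : Type*} (G : SimpleGraph V) where
  vertex : Fin 8 → V
  mate : Fin 8 → V
  vertex_injective : Function.Injective vertex
  neighborSet_vertex : ∀ i, G.neighborSet (vertex i) = {vertex (i - 1), vertex (i + 1), mate i}
  mate_of_odd : ∀ i, Odd i.val → mate i = vertex (i + 4)

namespace IsochromaticPole

variable {V : Type*} {G : SimpleGraph V} (P Q : IsochromaticPole G) {c : Sym2 V → Fin 3}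

/-- The vertices of the pole, excluding the outer ends of its dangling edges. -/
def verts [DecidableEq V] : Finset V :=
  Finset.univ.image P.vertex

theorem vertex_mem_verts [DecidableEq V] (i : Fin 8) : P.vertex i ∈ P.verts :=
  Finset.mem_image_of_mem _ (Finset.mem_univ i)

/-- The colour of the edge of the pole that leaves `P.vertex i` off the 8-cycle. -/
def spokeColor (c : Sym2 V → Fin 3) (i : Fin 8) : Fin 3 :=
  c s(P.vertex i, P.mate i)

/-- The colour of the edge from `P.vertex i` to its successor on the 8-cycle. -/
def rimColor (c : Sym2 V → Fin 3) (i : Fin 8) : Fin 3 :=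
  c s(P.vertex i, P.vertex (i + 1))

/-- The colouring is proper at all eight vertices of the pole. -/
def IsProper (c : Sym2 V → Fin 3) : Prop :=
  ∀ i, IsProperAt G c (P.vertex i)

theorem color_prev (c : Sym2 V → Fin 3) (i : Fin 8) :
    c s(P.vertex i, P.vertex (i - 1)) = P.rimColor c (i - 1) := by
  rw [rimColor, sub_add_cancel, Sym2.eq_swap]

theorem isProperAt_vertex_iff (hG : IsCubic G) (i : Fin 8) :
    IsProperAt G c (P.vertex i) ↔ P.rimColor c (i - 1) ≠ P.rimColor c i ∧
      P.rimColor c (i - 1) ≠ P.spokeColor c i ∧ P.rimColor c i ≠ P.spokeColor c i := by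
  rw [hG.isProperAt_iff (P.neighborSet_vertex i), P.color_prev c]
  rfl

theorem isProperAt_vertex_iff_colorVec (hG : IsCubic G) (i : Fin 8) :
    IsProperAt G c (P.vertex i) ↔ colorVec (P.rimColor c (i - 1)) + colorVec (P.rimColor c i) +
      colorVec (P.spokeColor c i) = 0 := by
  rw [hG.isProperAt_iff_colorVec (P.neighborSet_vertex i), P.color_prev c]
  rfl

theorem spokeColor_add_four_of_odd (c : Sym2 V → Fin 3) {i : Fin 8} (hi : Odd i.val) :
    P.spokeColor c (i + 4) = P.spokeColor c i := by
  have hi' : Odd (i + 4).val := by decide +revert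
  have hii : i + 4 + 4 = i := by decide +revert
  rw [spokeColor, spokeColor, P.mate_of_odd _ hi', P.mate_of_odd _ hi, hii, Sym2.eq_swap]

theorem spokeColor_add_four (hG : IsCubic G) (hP : P.IsProper c) (i : Fin 8) :
    P.spokeColor c (i + 4) = P.spokeColor c i := by
  have h₁₅ : P.spokeColor c 5 = P.spokeColor c 1 :=
    P.spokeColor_add_four_of_odd c (i := 1) (by decide)
  have h₃₇ : P.spokeColor c 7 = P.spokeColor c 3 :=
    P.spokeColor_add_four_of_odd c (i := 3) (by decide)
  obtain ⟨h₀₄, h₂₆⟩ := spoke_add_four (fun i => (P.isProperAt_vertex_iff hG i).1 (hP i)) h₁₅ h₃₇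
  fin_cases i
  exacts [h₀₄, h₁₅, h₂₆, h₃₇, h₀₄.symm, h₁₅.symm, h₂₆.symm, h₃₇.symm]

theorem isProper_of_forall_ne (hG : IsCubic G) {u : V}
    (hP : ∀ i, P.vertex i ≠ u → IsProperAt G c (P.vertex i))
    (hsum : colorVec (P.spokeColor c 0) + colorVec (P.spokeColor c 2) +
      colorVec (P.spokeColor c 4) + colorVec (P.spokeColor c 6) = 0) : P.IsProper c := by
  intro i
  by_cases hi : P.vertex i = u
  · have hvertex (j : Fin 8) (hj : j ≠ i) : colorVec (P.rimColor c (j - 1)) +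
        colorVec (P.rimColor c j) + colorVec (P.spokeColor c j) = 0 :=
      (P.isProperAt_vertex_iff_colorVec hG j).1 (hP j (hi ▸ P.vertex_injective.ne hj))
    rw [P.isProperAt_vertex_iff_colorVec hG, ← Fintype.sum_eq_single i hvertex,
      sum_colorVec_rim_spoke (P.spokeColor_add_four_of_odd c (i := 1) (by decide))
        (P.spokeColor_add_four_of_odd c (i := 3) (by decide)), hsum]
  · exact hP i hi

theorem spokeColor_eq_of_joined (c : Sym2 V → Fin 3) {i j : Fin 8} (hPQ : P.mate i = Q.vertex j)
    (hQP : Q.mate j = P.vertex i) : P.spokeColor c i = Q.spokeColor c j := by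
  rw [spokeColor, spokeColor, hPQ, hQP, Sym2.eq_swap]

theorem color_vertex_eq_spokeColor (c : Sym2 V → Fin 3) {i : Fin 8} {w : V}
    (hw : P.mate i = w) : c s(w, P.vertex i) = P.spokeColor c i := by
  rw [spokeColor, hw, Sym2.eq_swap]

theorem sum_colorVec_spokeColor_eq_zero (R : IsochromaticPole G) (hG : IsCubic G) {i j k : Fin 8}
    {w : V} (hN : G.neighborSet w = {P.vertex i, Q.vertex j, R.vertex k}) (hP : P.mate i = w)
    (hQ : Q.mate j = w) (hR : R.mate k = w) (hw : IsProperAt G c w) :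
    colorVec (P.spokeColor c i) + colorVec (Q.spokeColor c j) +
      colorVec (R.spokeColor c k) = 0 := by
  rw [← P.color_vertex_eq_spokeColor c hP, ← Q.color_vertex_eq_spokeColor c hQ,
    ← R.color_vertex_eq_spokeColor c hR]
  exact (hG.isProperAt_iff_colorVec hN).1 hw

theorem not_isProperAt_of_joined (hG : IsCubic G) (hP : P.IsProper c) (hQ : Q.IsProper c)
    {i j : Fin 8} {w : V} (hPQ : P.mate i = Q.vertex j) (hQP : Q.mate j = P.vertex i)
    (hPw : P.mate (i + 4) = w) (hQw : Q.mate (j + 4) = w)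
    (hne : P.vertex (i + 4) ≠ Q.vertex (j + 4)) : ¬ IsProperAt G c w := by
  intro hw
  have hadj (R : IsochromaticPole G) (k : Fin 8) (hk : R.mate k = w) : G.Adj w (R.vertex k) :=
    ((R.neighborSet_vertex k).superset (Or.inr (Or.inr hk.symm)) : G.Adj (R.vertex k) w).symm
  refine hne (hw (hadj P _ hPw) (hadj Q _ hQw) ?_)
  calc c s(w, P.vertex (i + 4))
    _ = P.spokeColor c (i + 4) := P.color_vertex_eq_spokeColor c hPw
    _ = P.spokeColor c i := P.spokeColor_add_four hG hP i
    _ = Q.spokeColor c j := P.spokeColor_eq_of_joined Q c hPQ hQP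
    _ = Q.spokeColor c (j + 4) := (Q.spokeColor_add_four hG hQ j).symm
    _ = c s(w, Q.vertex (j + 4)) := (Q.color_vertex_eq_spokeColor c hQw).symm

end IsochromaticPole

section G28

/-- The neighbours of a vertex of `G28`, read off the edge list so that they can be computed. -/
def g28Neighbors (v : Fin 44) : Finset (Fin 44) :=
  ((g28EdgeList.filter (·.1 = v)).map (·.2) ++ (g28EdgeList.filter (·.2 = v)).map (·.1)).toFinset

theorem mem_g28Neighbors {v w : Fin 44} : w ∈ g28Neighbors v ↔ g28.Adj v w := by
  have hloopless (v : Fin 44) : (v, v) ∉ g28EdgeList := by decide +kernel +revert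
  have hne (h : (v, w) ∈ g28EdgeList ∨ (w, v) ∈ g28EdgeList) : v ≠ w := by
    rintro rfl
    exact hloopless v (or_self_iff.1 h)
  rw [g28, SimpleGraph.fromRel_adj, and_iff_right_of_imp hne]
  simp [g28Neighbors]

theorem coe_g28Neighbors (v : Fin 44) : (g28Neighbors v : Set (Fin 44)) = g28.neighborSet v :=
  Set.ext fun _ => mem_g28Neighbors

theorem neighborSet_g28_eq {v x y z : Fin 44} (h : g28Neighbors v = {x, y, z}) :
    g28.neighborSet v = {x, y, z} := by
  rw [← coe_g28Neighbors, h]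
  push_cast
  rfl

theorem isCubic_g28 : IsCubic g28 := by
  have hcard : ∀ v, (g28Neighbors v).card = 3 := by decide +kernel
  intro v
  rw [← coe_g28Neighbors, Nat.card_coe_set_eq, Set.ncard_coe_finset, hcard]

theorem exists_isTwoFactor_g28 : ∃ H, IsTwoFactor g28 H := by
  let mate : Fin 44 → Fin 44 :=
    ![1, 0, 39, 38, 9, 8, 7, 6, 5, 4, 13, 12, 11, 10, 15, 14, 24, 20, 28, 21, 17, 19, 36, 37, 16,
      30, 34, 32, 18, 35, 25, 33, 27, 31, 26, 29, 22, 23, 3, 2, 43, 42, 41, 40]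
  have hmate : ∀ v, mate (mate v) = v := by decide +kernel
  have hadj : ∀ v, mate v ∈ g28Neighbors v := by decide +kernel
  exact isCubic_g28.exists_isTwoFactor hmate fun v => mem_g28Neighbors.1 (hadj v)

/-- The pole of `G28` joined to `poleC` by the edge 8-14 and to `poleD` by 12-26. The five poles
leave out the vertices 13, 32, 33 and 38. -/
def poleA : IsochromaticPole g28 where
  vertex := ![8, 9, 4, 17, 20, 11, 12, 5]
  mate := ![14, 11, 13, 5, 32, 9, 26, 17]
  vertex_injective := by decide
  neighborSet_vertex i := neighborSet_g28_eq (by decide +kernel +revert)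
  mate_of_odd := by decide

/-- The pole of `G28` joined to `poleC` by the edge 7-6. -/
def poleB : IsochromaticPole g28 where
  vertex := ![7, 16, 10, 22, 36, 24, 28, 18]
  mate := ![6, 24, 13, 18, 38, 16, 33, 22]
  vertex_injective := by decide
  neighborSet_vertex i := neighborSet_g28_eq (by decide +kernel +revert)
  mate_of_odd := by decide

/-- The central pole of `G28`, joined to `poleA` by the edge 14-8 and to `poleB` by 6-7. -/
def poleC : IsochromaticPole g28 where
  vertex := ![6, 15, 14, 21, 37, 23, 27, 19]
  mate := ![7, 23, 8, 19, 38, 15, 32, 21]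
  vertex_injective := by decide
  neighborSet_vertex i := neighborSet_g28_eq (by decide +kernel +revert)
  mate_of_odd := by decide

/-- The pole of `G28` joined to `poleA` by the edge 26-12 and to `poleE` by 39-2. -/
def poleD : IsochromaticPole g28 where
  vertex := ![25, 30, 31, 29, 26, 34, 39, 35]
  mate := ![13, 34, 33, 35, 12, 30, 2, 29]
  vertex_injective := by decide
  neighborSet_vertex i := neighborSet_g28_eq (by decide +kernel +revert)
  mate_of_odd := by decide

/-- The pole of `G28` joined to `poleD` by the edge 2-39. -/
def poleE : IsochromaticPole g28 where
  vertex := ![2, 0, 3, 42, 41, 1, 40, 43]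
  mate := ![39, 1, 38, 43, 33, 0, 32, 42]
  vertex_injective := by decide
  neighborSet_vertex i := neighborSet_g28_eq (by decide +kernel +revert)
  mate_of_odd := by decide

variable {c : Sym2 (Fin 44) → Fin 3}

theorem not_isProperAt_32 (hA : poleA.IsProper c) (hC : poleC.IsProper c) :
    ¬ IsProperAt g28 c 32 := by
  apply poleA.not_isProperAt_of_joined poleC isCubic_g28 hA hC (i := 0) (j := 2) <;> decide

theorem not_isProperAt_38 (hB : poleB.IsProper c) (hC : poleC.IsProper c) :
    ¬ IsProperAt g28 c 38 := by
  apply poleB.not_isProperAt_of_joined poleC isCubic_g28 hB hC (i := 0) (j := 0) <;> decide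

theorem not_isProperAt_13 (hA : poleA.IsProper c) (hD : poleD.IsProper c) :
    ¬ IsProperAt g28 c 13 := by
  apply poleA.not_isProperAt_of_joined poleD isCubic_g28 hA hD (i := 6) (j := 4) <;> decide

theorem not_isProperAt_33 (hD : poleD.IsProper c) (hE : poleE.IsProper c) :
    ¬ IsProperAt g28 c 33 := by
  apply poleD.not_isProperAt_of_joined poleE isCubic_g28 hD hE (i := 6) (j := 0) <;> decide

/-- Four vertex sets on each of which every colouring of `G28` fails to be proper somewhere. -/
def blocker : Fin 4 → Finset (Fin 44) :=
  ![poleA.verts ∪ poleC.verts ∪ {32}, poleB.verts ∪ poleC.verts ∪ {38},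
    poleA.verts ∪ poleD.verts ∪ {13}, poleD.verts ∪ poleE.verts ∪ {33}]

theorem exists_mem_blocker_not_isProperAt (c : Sym2 (Fin 44) → Fin 3) :
    ∀ j, ∃ v ∈ blocker j, ¬ IsProperAt g28 c v := by
  by_contra! ⟨j, hj⟩
  have hpole (P : IsochromaticPole g28) (hP : P.verts ⊆ blocker j) : P.IsProper c :=
    fun i => hj _ (hP (P.vertex_mem_verts i))
  fin_cases j
  · exact not_isProperAt_32 (hpole poleA (by decide)) (hpole poleC (by decide)) (hj 32 (by decide))
  · exact not_isProperAt_38 (hpole poleB (by decide)) (hpole poleC (by decide)) (hj 38 (by decide))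
  · exact not_isProperAt_13 (hpole poleA (by decide)) (hpole poleD (by decide)) (hj 13 (by decide))
  · exact not_isProperAt_33 (hpole poleD (by decide)) (hpole poleE (by decide)) (hj 33 (by decide))

theorem mem_poleC_and_mem_poleD {u w : Fin 44} (h : ∀ j, u ∈ blocker j ∨ w ∈ blocker j)
    (hu : u ∈ blocker 0) : u ∈ poleC.verts ∧ w ∈ poleD.verts := by
  have h₀₃ : Disjoint (blocker 0) (blocker 3) := by decide +kernel
  have h₁₃ : Disjoint (blocker 1) (blocker 3) := by decide +kernel
  have h₁₂ : Disjoint (blocker 1) (blocker 2) := by decide +kernel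
  have hC : blocker 0 ∩ blocker 1 ⊆ poleC.verts := by decide +kernel
  have hD : blocker 2 ∩ blocker 3 ⊆ poleD.verts := by decide +kernel
  have hw₃ : w ∈ blocker 3 := (h 3).resolve_left (Finset.disjoint_left.1 h₀₃ hu)
  have hu₁ : u ∈ blocker 1 := (h 1).resolve_right (Finset.disjoint_right.1 h₁₃ hw₃)
  have hw₂ : w ∈ blocker 2 := (h 2).resolve_left (Finset.disjoint_left.1 h₁₂ hu₁)
  exact ⟨hC (Finset.mem_inter_of_mem hu hu₁), hD (Finset.mem_inter_of_mem hw₂ hw₃)⟩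

theorem isProper_poleC (hA : poleA.IsProper c) (hB : poleB.IsProper c) (hE : poleE.IsProper c)
    (h₃₂ : IsProperAt g28 c 32) (h₃₈ : IsProperAt g28 c 38) {u : Fin 44}
    (hC : ∀ i, poleC.vertex i ≠ u → IsProperAt g28 c (poleC.vertex i)) : poleC.IsProper c := by
  have hCA : poleC.spokeColor c 2 = poleA.spokeColor c 4 :=
    (poleC.spokeColor_eq_of_joined poleA c (by decide) (by decide)).trans
      (poleA.spokeColor_add_four isCubic_g28 hA 0).symm
  have hCB : poleC.spokeColor c 0 = poleB.spokeColor c 4 :=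
    (poleC.spokeColor_eq_of_joined poleB c (by decide) (by decide)).trans
      (poleB.spokeColor_add_four isCubic_g28 hB 0).symm
  have hE₂₆ : poleE.spokeColor c 6 = poleE.spokeColor c 2 :=
    poleE.spokeColor_add_four isCubic_g28 hE 2
  have h₃₂' : colorVec (poleA.spokeColor c 4) + colorVec (poleC.spokeColor c 6) +
      colorVec (poleE.spokeColor c 6) = 0 := by
    apply poleA.sum_colorVec_spokeColor_eq_zero poleC poleE isCubic_g28
      (neighborSet_g28_eq _) _ _ _ h₃₂ <;> decide +kernel
  have h₃₈' : colorVec (poleB.spokeColor c 4) + colorVec (poleC.spokeColor c 4) +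
      colorVec (poleE.spokeColor c 2) = 0 := by
    apply poleB.sum_colorVec_spokeColor_eq_zero poleC poleE isCubic_g28
      (neighborSet_g28_eq _) _ _ _ h₃₈ <;> decide +kernel
  apply poleC.isProper_of_forall_ne isCubic_g28 hC
  rw [hCA, hCB]
  rw [hE₂₆] at h₃₂'
  linear_combination h₃₂' + h₃₈' - ZModModule.add_self (colorVec (poleE.spokeColor c 2))

theorem exists_not_isProperAt_g28 (c : Sym2 (Fin 44) → Fin 3) (u w : Fin 44) :
    ∃ v ∉ ({u, w} : Set (Fin 44)), ¬ IsProperAt g28 c v := by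
  by_contra! hc
  have hmeet (j : Fin 4) : u ∈ blocker j ∨ w ∈ blocker j := by
    obtain ⟨v, hv, hvc⟩ := exists_mem_blocker_not_isProperAt c j
    have huw : v ∈ ({u, w} : Set (Fin 44)) := not_imp_comm.1 (hc v) hvc
    rcases huw with rfl | rfl
    exacts [Or.inl hv, Or.inr hv]
  wlog hu : u ∈ blocker 0 generalizing u w
  · exact this w u (Set.pair_comm u w ▸ hc) (fun j => (hmeet j).symm) ((hmeet 0).resolve_left hu)
  obtain ⟨huC, hwD⟩ := mem_poleC_and_mem_poleD hmeet hu
  let rest : Finset (Fin 44) := poleA.verts ∪ poleB.verts ∪ poleE.verts ∪ {32, 38}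
  have hCD_rest : Disjoint (poleC.verts ∪ poleD.verts) rest := by decide +kernel
  have hCD : Disjoint poleC.verts poleD.verts := by decide +kernel
  have hrest (v : Fin 44) (hv : v ∈ rest) : IsProperAt g28 c v := by
    have hne (x : Fin 44) (hx : x ∈ poleC.verts ∪ poleD.verts) : v ≠ x :=
      (Finset.disjoint_iff_ne.1 hCD_rest x hx v hv).symm
    exact hc v fun h => h.elim (hne u (Finset.mem_union_left _ huC))
      (hne w (Finset.mem_union_right _ hwD))
  have hpole (P : IsochromaticPole g28) (hP : P.verts ⊆ rest) : P.IsProper c :=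
    fun i => hrest _ (hP (P.vertex_mem_verts i))
  have hA : poleA.IsProper c := hpole poleA (by decide +kernel)
  have h₃₂ : IsProperAt g28 c 32 := hrest 32 (by decide +kernel)
  have hC : poleC.IsProper c := by
    refine isProper_poleC hA (hpole poleB (by decide +kernel)) (hpole poleE (by decide +kernel))
      h₃₂ (hrest 38 (by decide +kernel)) (u := u) fun i hi => ?_
    have hiw : poleC.vertex i ≠ w :=
      Finset.disjoint_iff_ne.1 hCD _ (poleC.vertex_mem_verts i) w hwD
    exact hc _ fun h => h.elim hi hiw
  exact not_isProperAt_32 hA hC h₃₂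

theorem not_threeEdgeColorable_g28_induce_compl_pair (u w : Fin 44) :
    ¬ ThreeEdgeColorable (g28.induce ({u, w}ᶜ : Set (Fin 44))) := by
  intro h
  obtain ⟨c, hc⟩ := h.exists_isProperAt isCubic_g28
  obtain ⟨v, hv, hvc⟩ := exists_not_isProperAt_g28 c u w
  exact hvc (hc v hv)

theorem three_le_resistance_g28 : 3 ≤ resistance g28 := by
  refine lt_resistance_of_forall_ncard_eq (by simp) fun S hS => ?_
  obtain ⟨u, w, -, rfl⟩ := Set.ncard_eq_two.1 hS
  exact not_threeEdgeColorable_g28_induce_compl_pair u w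

theorem four_le_oddness_g28 : 4 ≤ oddness g28 := by
  have hle : 3 ≤ oddness g28 :=
    three_le_resistance_g28.trans (resistance_le_oddness isCubic_g28 exists_isTwoFactor_g28)
  have hV : Even (Nat.card (Fin 44)) := by rw [Nat.card_fin]; decide
  obtain ⟨k, hk⟩ := even_oddness hV exists_isTwoFactor_g28
  omega

end G28

/-- The graph `G28` is cubic, admits no proper 3-edge-colouring, has resistance at
least 3 (removing any two vertices leaves an uncolourable graph), and oddness at
least 4. -/
theorem g28_properties :
    IsCubic g28 ∧
    ¬ ThreeEdgeColorable g28 ∧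
    (∀ u w : Fin 44, ¬ ThreeEdgeColorable (g28.induce ({u, w}ᶜ : Set (Fin 44)))) ∧
    3 ≤ resistance g28 ∧
    4 ≤ oddness g28 := by
  refine ⟨isCubic_g28, fun h => ?_, not_threeEdgeColorable_g28_induce_compl_pair,
    three_le_resistance_g28, four_le_oddness_g28⟩
  exact not_threeEdgeColorable_g28_induce_compl_pair 0 0 (h.induce _)
end

section
/- Let G be a connected simple cubic graph in which any two cycles have a vertex in common. Then G is isomorphic to the complete graph K4 or to the complete bipartite graph K(3,3). (Equivalently, for a connected cubic graph G, the cyclic connectivity ζ(G) attains its upper bound β(G) = |E(G)| − |V(G)| + 1 precisely in these cases, together with the multigraph consisting of two vertices joined by three parallel edges.) -/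
/-!
Let `C` be a shortest cycle, of length `g`, in a nonempty cubic graph on `n` vertices in which any
two cycles meet. The vertices off `C` induce a forest, so at least `n - g + 2` edges leave them; but
at most one edge leaves each vertex of `C`. Hence `n + 2 ≤ 2 * g`, and by pigeonhole some vertex off
`C` has two neighbours on `C`. The two cycles through that vertex have total length `g + 4`, so
`g ≤ 4`. If `g = 3` then `n ≤ 4` and the graph is `K₄`; if `g = 4` it is triangle-free with `n ≤ 6`,
so the neighbourhoods of adjacent vertices are complementary and the graph is `K₃,₃`.
-/

open Finset SimpleGraph

section DegreeCounting

variable {V : Type*} {G : SimpleGraph V} [DecidableRel G.Adj]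

variable (G) in
/-- The degree of `v` into `S`: the number of neighbours of `v` that lie in `S`. Edges between two
sets of vertices are counted by summing it over one of the two sets. -/
def degreeIn (S : Finset V) (v : V) : ℕ :=
  #{w ∈ S | G.Adj v w}

theorem sum_degreeIn_comm (S T : Finset V) :
    ∑ v ∈ S, degreeIn G T v = ∑ v ∈ T, degreeIn G S v := by
  simpa only [degreeIn, bipartiteAbove, bipartiteBelow, G.adj_comm] using
    sum_card_bipartiteAbove_eq_sum_card_bipartiteBelow G.Adj (s := S) (t := T)

theorem card_edgeFinset_lt_card_of_isAcyclic [Fintype V] [Nonempty V] (hG : G.IsAcyclic) :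
    #G.edgeFinset < Fintype.card V := by
  classical
  obtain ⟨T, hGT, -, hT⟩ :=
    (connected_top (V := V)).exists_isTree_le_of_le_of_isAcyclic le_top hG
  have hle : #G.edgeFinset ≤ #T.edgeFinset := card_le_card (edgeFinset_mono hGT)
  have := hT.card_edgeFinset
  lia

theorem degreeIn_coe_eq_degree_induce (S : Finset V) (v : S) :
    degreeIn G S v = (G.induce (S : Set V)).degree v := by
  rw [degreeIn, ← card_neighborFinset_eq_degree, ← card_map (.subtype (· ∈ S))]
  congr 1
  ext w
  simp [and_comm]

theorem sum_degreeIn_self_add_two_le {S : Finset V} (hS : S.Nonempty)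
    (hac : (G.induce (S : Set V)).IsAcyclic) : ∑ v ∈ S, degreeIn G S v + 2 ≤ 2 * #S := by
  have : Nonempty (S : Set V) := hS.to_subtype
  have hlt : #(G.induce (S : Set V)).edgeFinset < #S := by
    simpa using card_edgeFinset_lt_card_of_isAcyclic hac
  have hsum : ∑ v ∈ S, degreeIn G S v = 2 * #(G.induce (S : Set V)).edgeFinset := by
    rw [← sum_degrees_eq_twice_card_edges, ← sum_coe_sort]
    exact sum_congr rfl fun v _ => degreeIn_coe_eq_degree_induce S v
  lia

variable [Fintype V] [DecidableEq V]

theorem degreeIn_add_degreeIn_compl (S : Finset V) (v : V) :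
    degreeIn G S v + degreeIn G Sᶜ v = G.degree v := by
  rw [degreeIn, degreeIn, ← card_union_of_disjoint (disjoint_compl_right.mono
    (filter_subset _ _) (filter_subset _ _)), ← filter_union, union_compl,
    ← neighborFinset_eq_filter, card_neighborFinset_eq_degree]

theorem mul_card_add_two_le_sum_degreeIn_compl {k : ℕ} {S : Finset V} (hS : S.Nonempty)
    (hac : (G.induce (S : Set V)).IsAcyclic) (hdeg : ∀ v ∈ S, k + 2 ≤ G.degree v) :
    k * #S + 2 ≤ ∑ v ∈ S, degreeIn G Sᶜ v := by
  have hself := sum_degreeIn_self_add_two_le hS hac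
  have hsplit : #S * (k + 2) ≤ ∑ v ∈ S, degreeIn G S v + ∑ v ∈ S, degreeIn G Sᶜ v := by
    rw [← sum_add_distrib, ← smul_eq_mul]
    exact card_nsmul_le_sum _ _ _ fun v hv =>
      (hdeg v hv).trans_eq (degreeIn_add_degreeIn_compl S v).symm
  linarith

end DegreeCounting

section Cycles

variable {V : Type*} {G : SimpleGraph V}

theorem exists_isCycle_support_subset_of_not_isAcyclic_induce {s : Set V}
    (hs : ¬ (G.induce s).IsAcyclic) :
    ∃ (w : V) (q : G.Walk w w), q.IsCycle ∧ ∀ z ∈ q.support, z ∈ s := by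
  simp only [IsAcyclic, not_forall, not_not] at hs
  obtain ⟨w, q, hq⟩ := hs
  let f : G.induce s ↪g G := Embedding.induce s
  refine ⟨f.toHom w, q.map f.toHom, hq.map f.injective, fun z hz => ?_⟩
  rw [Walk.support_map, List.mem_map] at hz
  obtain ⟨x, -, rfl⟩ := hz
  exact x.2

theorem card_support_toFinset_of_isCycle [DecidableEq V] {u : V} {C : G.Walk u u}
    (hC : C.IsCycle) : #C.support.toFinset = C.length := by
  have htail : C.support.toFinset = C.support.tail.toFinset := by
    rw [← C.cons_tail_support, List.toFinset_cons, List.tail_cons, insert_eq_self,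
      List.mem_toFinset]
    exact C.end_mem_tail_support hC.not_nil
  rw [htail, List.toFinset_card_of_nodup hC.support_nodup, List.length_tail, Walk.length_support,
    Nat.add_sub_cancel]

theorem two_le_degreeIn_support_of_isCycle [DecidableEq V] [DecidableRel G.Adj] {u v : V}
    {C : G.Walk u u} (hC : C.IsCycle) (hv : v ∈ C.support) :
    2 ≤ degreeIn G C.support.toFinset v := by
  rw [← hC.ncard_neighborSet_toSubgraph_eq_two hv, degreeIn, ← Set.ncard_coe_finset]
  refine Set.ncard_le_ncard (fun w hw => ?_) (finite_toSet _)
  simpa using ⟨C.mem_verts_toSubgraph.1 (C.toSubgraph.edge_vert hw.symm), hw.adj_sub⟩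

theorem girth_le_length_add_two_of_isPath {v x y : V} {p : G.Walk x y} (hp : p.IsPath)
    (hxy : x ≠ y) (hv : v ∉ p.support) (hvx : G.Adj v x) (hyv : G.Adj y v) :
    G.girth ≤ p.length + 2 := by
  have hpath : (Walk.cons hvx p).IsPath := hp.cons hv
  have hcycle : (Walk.cons hyv (Walk.cons hvx p)).IsCycle := by
    rw [Walk.isCycle_iff_isPath_tail_and_le_length]
    have : p.length ≠ 0 := fun h => hxy (Walk.eq_of_length_eq_zero h)
    exact ⟨by simpa using hpath, by simp only [Walk.length_cons]; lia⟩
  exact girth_le_length hcycle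

/-- The two arcs of `C` between the neighbours of `v` close up through `v` to two cycles. -/
theorem two_mul_girth_le_length_add_four [DecidableEq V] [DecidableRel G.Adj] {u v : V}
    {C : G.Walk u u} (hC : C.IsCycle) (hv : v ∉ C.support)
    (hdeg : 2 ≤ degreeIn G C.support.toFinset v) : 2 * G.girth ≤ C.length + 4 := by
  obtain ⟨x, hx, y, hy, hxy⟩ := one_lt_card.1 hdeg
  simp only [mem_filter, List.mem_toFinset] at hx hy
  obtain ⟨hx, hvx⟩ := hx
  obtain ⟨hy, hvy⟩ := hy
  set D := C.rotate x hx
  have hD : D.IsCycle := hC.rotate hx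
  have hvD : v ∉ D.support := by simpa [D] using hv
  have hyD : y ∈ D.support := by simpa [D] using hy
  have htake : G.girth ≤ (D.takeUntil y hyD).length + 2 :=
    girth_le_length_add_two_of_isPath (hD.isPath_takeUntil hyD) hxy
      (fun h => hvD (D.support_takeUntil_subset_support hyD h)) hvx hvy.symm
  have hdropPath : (D.dropUntil y hyD).IsPath :=
    Walk.IsCycle.isPath_of_append_right (Walk.not_nil_of_ne hxy) ((D.take_spec hyD).symm ▸ hD)
  have hdrop : G.girth ≤ (D.dropUntil y hyD).length + 2 :=
    girth_le_length_add_two_of_isPath hdropPath hxy.symm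
      (fun h => hvD (D.support_dropUntil_subset_support hyD h)) hvy hvx.symm
  have hlen : (D.takeUntil y hyD).length + (D.dropUntil y hyD).length = C.length := by
    rw [← Walk.length_append, Walk.take_spec, Walk.length_rotate]
  lia

theorem cliqueFree_three_of_three_lt_girth (hG : 3 < G.girth) : G.CliqueFree 3 := by
  intro s hs
  obtain ⟨u, w, hw, hlen⟩ := is3Clique_iff_exists_cycle_length_three.1 ⟨s, hs⟩
  exact (girth_le_length hw).not_gt (hlen ▸ hG)

end Cycles

section Forests

variable {V : Type*} {G : SimpleGraph V} [Fintype V] [DecidableRel G.Adj]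

theorem exists_isCycle_notMem_support_of_three_le_degree (hdeg : ∀ v, 3 ≤ G.degree v) (u : V) :
    ∃ (w : V) (q : G.Walk w w), q.IsCycle ∧ u ∉ q.support := by
  classical
  have hne : ({u}ᶜ : Finset V).Nonempty := by
    obtain ⟨w, hw⟩ := (G.degree_pos_iff_exists_adj u).1 (by linarith [hdeg u])
    exact ⟨w, by simpa using hw.ne'⟩
  have hcyc : ¬ (G.induce (({u}ᶜ : Finset V) : Set V)).IsAcyclic := by
    intro hac
    have hcut := mul_card_add_two_le_sum_degreeIn_compl (k := 1) hne hac fun v _ => hdeg v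
    have hle : degreeIn G {u}ᶜ u ≤ #({u}ᶜ : Finset V) := card_filter_le _ _
    rw [compl_compl, sum_degreeIn_comm, sum_singleton] at hcut
    lia
  obtain ⟨w, q, hq, hsub⟩ := exists_isCycle_support_subset_of_not_isAcyclic_induce hcyc
  exact ⟨w, q, hq, fun hu => by simpa using hsub u hu⟩

theorem girth_lt_card_of_three_le_degree [Nonempty V] (hdeg : ∀ v, 3 ≤ G.degree v) :
    G.girth < Fintype.card V := by
  classical
  obtain ⟨u⟩ := ‹Nonempty V›
  obtain ⟨w, q, hq, hu⟩ := exists_isCycle_notMem_support_of_three_le_degree hdeg u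
  calc G.girth ≤ q.length := girth_le_length hq
    _ = #q.support.toFinset := (card_support_toFinset_of_isCycle hq).symm
    _ < Fintype.card V := card_lt_univ_of_notMem (by simpa using hu)

variable [DecidableEq V]

theorem exists_two_le_degreeIn_of_isAcyclic_induce_compl {S : Finset V} (hS : Sᶜ.Nonempty)
    (hac : (G.induce ((Sᶜ : Finset V) : Set V)).IsAcyclic)
    (hdeg : ∀ v ∉ S, 3 ≤ G.degree v) : ∃ v ∉ S, 2 ≤ degreeIn G S v := by
  have hcut := mul_card_add_two_le_sum_degreeIn_compl (k := 1) hS hac fun v hv =>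
    hdeg v (mem_compl.1 hv)
  rw [compl_compl] at hcut
  obtain ⟨v, hv, hlt⟩ : ∃ v ∈ Sᶜ, 1 < degreeIn G S v :=
    exists_lt_of_sum_lt (by rw [sum_const, smul_eq_mul]; lia)
  exact ⟨v, by simpa using hv, hlt⟩

theorem card_add_two_le_two_mul_length_of_isAcyclic_induce_compl
    (hG : G.IsRegularOfDegree 3) {u : V} {C : G.Walk u u} (hC : C.IsCycle)
    (hne : (C.support.toFinsetᶜ).Nonempty)
    (hac : (G.induce ((C.support.toFinsetᶜ : Finset V) : Set V)).IsAcyclic) :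
    Fintype.card V + 2 ≤ 2 * C.length := by
  set S := C.support.toFinset
  have hcut := mul_card_add_two_le_sum_degreeIn_compl (k := 1) hne hac fun v _ => (hG v).ge
  have hone : ∀ v ∈ S, degreeIn G Sᶜ v ≤ 1 := fun v hv => by
    have htwo := two_le_degreeIn_support_of_isCycle hC (List.mem_toFinset.1 hv)
    have hthree := (degreeIn_add_degreeIn_compl S v).trans (hG v)
    lia
  have hsum : ∑ v ∈ S, degreeIn G Sᶜ v ≤ #S := by simpa using sum_le_card_nsmul S _ 1 hone
  rw [compl_compl, sum_degreeIn_comm] at hcut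
  have hcard := S.card_add_card_compl
  have hlen : #S = C.length := card_support_toFinset_of_isCycle hC
  lia

end Forests

section SmallRegularGraphs

variable {V : Type*} {G : SimpleGraph V}

theorem nonempty_iso_completeBipartiteGraph [Fintype V] [DecidableEq V] {S : Finset V} {m n : ℕ}
    (hm : #S = m) (hn : #Sᶜ = n) (hadj : ∀ x y, G.Adj x y ↔ (x ∈ S ↔ y ∉ S)) :
    Nonempty (G ≃g completeBipartiteGraph (Fin m) (Fin n)) := by
  let e : S ⊕ {x // x ∉ S} ≃ V := Equiv.sumCompl (· ∈ S)
  let f : completeBipartiteGraph S {x // x ∉ S} ≃g G := ⟨e, by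
    rintro (x | x) (y | y) <;> simp [e, hadj, x.2, y.2]⟩
  exact ⟨f.symm.trans (completeBipartiteGraphCongr (S.equivFinOfCardEq hm)
    (Fintype.equivFinOfCardEq (by simpa [← card_compl] using hn)))⟩

variable [Fintype V] [DecidableRel G.Adj] {d : ℕ}

theorem nonempty_iso_top_of_isRegularOfDegree [Nonempty V] (hG : G.IsRegularOfDegree d)
    (hcard : Fintype.card V ≤ d + 1) : Nonempty (G ≃g (⊤ : SimpleGraph (Fin (d + 1)))) := by
  classical
  obtain ⟨u⟩ := ‹Nonempty V›
  have hlt := G.degree_lt_card_verts u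
  rw [hG u] at hlt
  have hcard' : Fintype.card V = d + 1 := by lia
  have htop : G = ⊤ := eq_top_iff_forall_isUniversal.2 fun v => by
    rw [← degree_eq_card_sub_one, hG v, hcard', Nat.add_sub_cancel]
  exact htop ▸ ⟨Iso.completeGraph (Fintype.equivFinOfCardEq hcard')⟩

theorem neighborFinset_eq_compl_of_adj [DecidableEq V] (hG : G.IsRegularOfDegree d)
    (hfree : G.CliqueFree 3) (hcard : Fintype.card V ≤ 2 * d) {u v : V} (h : G.Adj u v) :
    G.neighborFinset u = (G.neighborFinset v)ᶜ := by
  have hdisj : G.neighborFinset u ⊆ (G.neighborFinset v)ᶜ := by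
    intro w hw
    simp only [mem_neighborFinset, mem_compl] at hw ⊢
    exact fun hvw => hfree {u, v, w} (is3Clique_triple_iff.2 ⟨h, hw, hvw⟩)
  refine eq_of_subset_of_card_le hdisj ?_
  rw [card_compl, card_neighborFinset_eq_degree, card_neighborFinset_eq_degree, hG u, hG v]
  lia

theorem nonempty_iso_completeBipartiteGraph_of_isRegularOfDegree [Nonempty V]
    (hG : G.IsRegularOfDegree d) (hfree : G.CliqueFree 3) (hcard : Fintype.card V ≤ 2 * d) :
    Nonempty (G ≃g completeBipartiteGraph (Fin d) (Fin d)) := by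
  classical
  obtain ⟨v⟩ := ‹Nonempty V›
  have hcompl {x y : V} (h : G.Adj x y) : G.neighborFinset x = (G.neighborFinset y)ᶜ :=
    neighborFinset_eq_compl_of_adj hG hfree hcard h
  obtain ⟨u, hvu⟩ : ∃ u, G.Adj v u := by
    rw [← G.degree_pos_iff_exists_adj, hG v]
    have := Fintype.card_pos_iff.2 ⟨v⟩
    lia
  have hin : ∀ x ∈ G.neighborFinset v, G.neighborFinset x = (G.neighborFinset v)ᶜ := fun x hx =>
    hcompl ((G.mem_neighborFinset v x).1 hx).symm
  have hout : ∀ x ∉ G.neighborFinset v, G.neighborFinset x = G.neighborFinset v := fun x hx => by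
    have hux : G.Adj u x := by
      rwa [← mem_neighborFinset, hcompl hvu.symm, mem_compl]
    rw [hcompl hux.symm, hcompl hvu.symm, compl_compl]
  refine nonempty_iso_completeBipartiteGraph (S := G.neighborFinset v) (hG v) ?_ fun x y => ?_
  · rw [← hcompl hvu.symm]
    exact hG u
  · rw [← mem_neighborFinset]
    by_cases hx : x ∈ G.neighborFinset v
    · simp only [hin x hx, mem_compl, hx, true_iff]
    · simp only [hout x hx, hx, false_iff, not_not]

end SmallRegularGraphs

theorem IsCubic.isRegularOfDegree_three {V : Type*} {G : SimpleGraph V} [G.LocallyFinite]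
    (hG : IsCubic G) : G.IsRegularOfDegree 3 := fun v => by
  rw [← card_neighborSet_eq_degree, ← Nat.card_eq_fintype_card, hG v]

theorem cubic_all_cycles_meet_general {V : Type*} [Finite V] [Nonempty V] {G : SimpleGraph V}
    (hcubic : IsCubic G)
    (hmeet : ∀ (u w : V) (p : G.Walk u u) (q : G.Walk w w),
      p.IsCycle → q.IsCycle → ∃ z : V, z ∈ p.support ∧ z ∈ q.support) :
    Nonempty (G ≃g (⊤ : SimpleGraph (Fin 4))) ∨
    Nonempty (G ≃g completeBipartiteGraph (Fin 3) (Fin 3)) := by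
  classical
  have := Fintype.ofFinite V
  have hreg := hcubic.isRegularOfDegree_three
  have hdeg : ∀ v, 3 ≤ G.degree v := fun v => (hreg v).ge
  obtain ⟨w, q, hq, -⟩ :=
    exists_isCycle_notMem_support_of_three_le_degree hdeg (Classical.arbitrary V)
  have hcyclic : ¬ G.IsAcyclic := fun h => h q hq
  obtain ⟨u, C, hC, hlen⟩ := exists_girth_eq_length.2 hcyclic
  have hne : (C.support.toFinsetᶜ).Nonempty := by
    rw [← card_pos, card_compl, card_support_toFinset_of_isCycle hC, ← hlen]
    exact Nat.sub_pos_of_lt (girth_lt_card_of_three_le_degree hdeg)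
  have hac : (G.induce ((C.support.toFinsetᶜ : Finset V) : Set V)).IsAcyclic := by
    by_contra h
    obtain ⟨w, q, hq, hdisj⟩ := exists_isCycle_support_subset_of_not_isAcyclic_induce h
    obtain ⟨z, hzC, hzq⟩ := hmeet u w C q hC hq
    simpa [hzC] using hdisj z hzq
  have hcard := card_add_two_le_two_mul_length_of_isAcyclic_induce_compl hreg hC hne hac
  obtain ⟨v, hv, hvC⟩ :=
    exists_two_le_degreeIn_of_isAcyclic_induce_compl hne hac fun v _ => hdeg v
  have hgirth := two_mul_girth_le_length_add_four hC (by simpa using hv) hvC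
  obtain h3 | h4 : G.girth = 3 ∨ G.girth = 4 := by have := three_le_girth hcyclic; lia
  · exact .inl (nonempty_iso_top_of_isRegularOfDegree hreg (by lia))
  · exact .inr (nonempty_iso_completeBipartiteGraph_of_isRegularOfDegree hreg
      (cliqueFree_three_of_three_lt_girth (by lia)) (by lia))

/-- A connected simple cubic graph in which any two cycles share a vertex is
isomorphic to `K₄` or to `K_{3,3}`. -/
theorem cubic_all_cycles_meet {V : Type*} [Fintype V] (G : SimpleGraph V)
    (hconn : G.Connected) (hcubic : IsCubic G)
    (hmeet : ∀ (u w : V) (p : G.Walk u u) (q : G.Walk w w),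
      p.IsCycle → q.IsCycle → ∃ z : V, z ∈ p.support ∧ z ∈ q.support) :
    Nonempty (G ≃g (⊤ : SimpleGraph (Fin 4))) ∨
    Nonempty (G ≃g completeBipartiteGraph (Fin 3) (Fin 3)) :=
  have := hconn.nonempty
  cubic_all_cycles_meet_general hcubic hmeet
end
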